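/- Let |Ψ⟩ = |φ₁⟩ ⊗ ... ⊗ |φ_m⟩ be a k-producible pure state (each |φ_i⟩ on at most k parties) with entanglement depth exactly k, and let D = {|φ_i⟩ : |φ_i⟩ lives on exactly k parties and is genuinely entangled}. Then the k-depth entanglement detection length satisfies l_dep^k(|Ψ⟩) = min_{|φ_i⟩∈D} l_GME(|φ_i⟩), and in particular 2 ≤ l_dep^k(|Ψ⟩) ≤ k. -/

import Mathlib

open scoped Matrix ComplexOrder

noncomputable section

namespace QDL

variable {ι : Type*} [Fintype ι] [DecidableEq ι]

abbrev Config (d : ι → ℕ) := ∀ i, Fin (d i)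

def IsState {d : ι → ℕ} (ρ : Matrix (Config d) (Config d) ℂ) : Prop :=
  ρ.PosSemidef ∧ ρ.trace = 1

def merge {d : ι → ℕ} (S : Finset ι)
    (f : Config (fun i : {i // i ∈ S} => d i))
    (g : Config (fun i : {i // i ∉ S} => d i)) : Config d := fun i =>
  if h : i ∈ S then f ⟨i, h⟩ else g ⟨i, h⟩

/-- Partial trace of `ρ` onto the subsystems in `S`. -/
def marginal {d : ι → ℕ} (S : Finset ι)
    (ρ : Matrix (Config d) (Config d) ℂ) :
    Matrix (Config (fun i : {i // i ∈ S} => d i))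
      (Config (fun i : {i // i ∈ S} => d i)) ℂ :=
  fun f g => ∑ h : Config (fun i : {i // i ∉ S} => d i), ρ (merge S f h) (merge S g h)

def Compatible {d : ι → ℕ} (𝒮 : Finset (Finset ι))
    (ρ σ : Matrix (Config d) (Config d) ℂ) : Prop :=
  ∀ S ∈ 𝒮, marginal S σ = marginal S ρ

def prodMat {d : ι → ℕ} (A : ∀ i, Matrix (Fin (d i)) (Fin (d i)) ℂ) :
    Matrix (Config d) (Config d) ℂ := fun f g => ∏ i, A i (f i) (g i)

def FullySep {d : ι → ℕ} (ρ : Matrix (Config d) (Config d) ℂ) : Prop :=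
  ∃ (k : ℕ) (w : Fin k → ℝ) (A : Fin k → ∀ i, Matrix (Fin (d i)) (Fin (d i)) ℂ),
    (∀ j, 0 ≤ w j) ∧ (∀ j i, (A j i).PosSemidef) ∧
    ρ = ∑ j, (w j : ℂ) • prodMat (A j)

def prodAcross {d : ι → ℕ} (S : Finset ι)
    (A : Matrix (Config (fun i : {i // i ∈ S} => d i))
      (Config (fun i : {i // i ∈ S} => d i)) ℂ)
    (B : Matrix (Config (fun i : {i // i ∉ S} => d i))
      (Config (fun i : {i // i ∉ S} => d i)) ℂ) :
    Matrix (Config d) (Config d) ℂ :=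
  fun f g => A (fun i => f i) (fun i => g i) * B (fun i => f i) (fun i => g i)

/-- `ρ` is a mixture of biproduct states with respect to the bipartition `S | Sᶜ`. -/
def SepAcross {d : ι → ℕ} (S : Finset ι)
    (ρ : Matrix (Config d) (Config d) ℂ) : Prop :=
  ∃ (k : ℕ) (w : Fin k → ℝ)
    (A : Fin k → Matrix (Config (fun i : {i // i ∈ S} => d i))
      (Config (fun i : {i // i ∈ S} => d i)) ℂ)
    (B : Fin k → Matrix (Config (fun i : {i // i ∉ S} => d i))
      (Config (fun i : {i // i ∉ S} => d i)) ℂ),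
    (∀ j, 0 ≤ w j) ∧ (∀ j, (A j).PosSemidef ∧ (B j).PosSemidef) ∧
    ρ = ∑ j, (w j : ℂ) • prodAcross S (A j) (B j)

/-- Biseparable: mixture of states, each separable across some nontrivial bipartition. -/
def Bisep {d : ι → ℕ} (ρ : Matrix (Config d) (Config d) ℂ) : Prop :=
  ∃ (k : ℕ) (w : Fin k → ℝ) (S : Fin k → Finset ι)
    (σ : Fin k → Matrix (Config d) (Config d) ℂ),
    (∀ j, 0 ≤ w j) ∧ (∀ j, S j ≠ ∅ ∧ S j ≠ Finset.univ) ∧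
    (∀ j, SepAcross (S j) (σ j)) ∧ ρ = ∑ j, (w j : ℂ) • σ j

def DetectsEnt {d : ι → ℕ} (𝒮 : Finset (Finset ι))
    (ρ : Matrix (Config d) (Config d) ℂ) : Prop :=
  ∀ σ, IsState σ → Compatible 𝒮 ρ σ → ¬ FullySep σ

def lEnt {d : ι → ℕ} (ρ : Matrix (Config d) (Config d) ℂ) : ℕ∞ :=
  sInf {m : ℕ∞ | ∃ 𝒮 : Finset (Finset ι), DetectsEnt 𝒮 ρ ∧
    m = ((𝒮.sup Finset.card : ℕ) : ℕ∞)}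

def DetectsBipa {d : ι → ℕ} (G : Finset ι) (𝒮 : Finset (Finset ι))
    (ρ : Matrix (Config d) (Config d) ℂ) : Prop :=
  ∀ σ, IsState σ → Compatible 𝒮 ρ σ → ¬ SepAcross G σ

def lBipa {d : ι → ℕ} (ρ : Matrix (Config d) (Config d) ℂ)
    (G : Finset ι) : ℕ∞ :=
  sInf {m : ℕ∞ | ∃ 𝒮 : Finset (Finset ι), DetectsBipa G 𝒮 ρ ∧
    m = ((𝒮.sup Finset.card : ℕ) : ℕ∞)}

def DetectsGME {d : ι → ℕ} (𝒮 : Finset (Finset ι))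
    (ρ : Matrix (Config d) (Config d) ℂ) : Prop :=
  ∀ σ, IsState σ → Compatible 𝒮 ρ σ → ¬ Bisep σ

def lGME {d : ι → ℕ} (ρ : Matrix (Config d) (Config d) ℂ) : ℕ∞ :=
  sInf {m : ℕ∞ | ∃ 𝒮 : Finset (Finset ι), DetectsGME 𝒮 ρ ∧
    m = ((𝒮.sup Finset.card : ℕ) : ℕ∞)}
/-- Product of block vectors over a labelling `P : ι → Fin s` of parties into blocks. -/
def ProdOver {d : ι → ℕ} {s : ℕ} (P : ι → Fin s)
    (u : ∀ t : Fin s, (Config (fun i : {i // P i = t} => d i)) → ℂ) :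
    Config d → ℂ :=
  fun f => ∏ t, u t (fun i => f i)

/-- A pure state vector is `s`-separable if it is a product across a partition of the
parties into `s` (nonempty) blocks. -/
def PureSep {d : ι → ℕ} (s : ℕ) (v : Config d → ℂ) : Prop :=
  ∃ P : ι → Fin s, Function.Surjective P ∧
    ∃ u, v = ProdOver (d := d) P u

/-- A mixed state is `s`-separable if it is a convex combination of (at least)
`s`-separable pure states. -/
def SepDeg {d : ι → ℕ} (s : ℕ) (ρ : Matrix (Config d) (Config d) ℂ) : Prop :=
  ∃ (k : ℕ) (w : Fin k → ℝ) (v : Fin k → Config d → ℂ),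
    (∀ j, 0 ≤ w j) ∧ (∀ j, PureSep s (v j)) ∧
    ρ = ∑ j, (w j : ℂ) • Matrix.vecMulVec (v j) (star (v j))

/-- A pure state vector is `k`-producible if it is a product of factors each involving at
most `k` parties. -/
def PureProd {d : ι → ℕ} (k : ℕ) (v : Config d → ℂ) : Prop :=
  ∃ (s : ℕ) (P : ι → Fin s),
    (∀ t : Fin s, (Finset.univ.filter (fun i => P i = t)).card ≤ k) ∧
    ∃ u, v = ProdOver (d := d) P u

/-- A mixed state is `k`-producible if it is a convex combination of `k`-producible pure
states. -/
def Producible {d : ι → ℕ} (k : ℕ) (ρ : Matrix (Config d) (Config d) ℂ) : Prop :=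
  ∃ (kk : ℕ) (w : Fin kk → ℝ) (v : Fin kk → Config d → ℂ),
    (∀ j, 0 ≤ w j) ∧ (∀ j, PureProd k (v j)) ∧
    ρ = ∑ j, (w j : ℂ) • Matrix.vecMulVec (v j) (star (v j))

/-- The minimal number of marginals of size `l_GME(ρ)` needed to detect GME. -/
def mGME {d : ι → ℕ} (ρ : Matrix (Config d) (Config d) ℂ) : ℕ∞ :=
  sInf {m : ℕ∞ | ∃ 𝒮 : Finset (Finset ι), DetectsGME 𝒮 ρ ∧
    (∀ S ∈ 𝒮, (S.card : ℕ∞) = lGME ρ) ∧ m = (𝒮.card : ℕ∞)}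


/-- `𝒮` detects `ρ`'s `k`-depth entanglement: every compatible state has entanglement
depth at least `k`, i.e. is not `(k−1)`-producible. -/
def DetectsDep {d : ι → ℕ} (k : ℕ) (𝒮 : Finset (Finset ι))
    (ρ : Matrix (Config d) (Config d) ℂ) : Prop :=
  ∀ σ, IsState σ → Compatible 𝒮 ρ σ → ¬ Producible (k - 1) σ

def lDep {d : ι → ℕ} (k : ℕ) (ρ : Matrix (Config d) (Config d) ℂ) : ℕ∞ :=
  sInf {m : ℕ∞ | ∃ 𝒮 : Finset (Finset ι), DetectsDep k 𝒮 ρ ∧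
    m = ((𝒮.sup Finset.card : ℕ) : ℕ∞)}

set_option linter.unusedSectionVars false

section Marginals

variable {d : ι → ℕ}

lemma merge_restrict (S : Finset ι) (x : Config d) :
    merge S (fun i => x i) (fun i => x i) = x := by
  funext i; unfold merge; split_ifs <;> rfl

lemma merge_of_mem (S : Finset ι) (f : Config (fun i : {i // i ∈ S} => d i))
    (g : Config (fun i : {i // i ∉ S} => d i)) {i : ι} (h : i ∈ S) :
    merge S f g i = f ⟨i, h⟩ := by simp [merge, h]

lemma merge_of_notMem (S : Finset ι) (f : Config (fun i : {i // i ∈ S} => d i))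
    (g : Config (fun i : {i // i ∉ S} => d i)) {i : ι} (h : i ∉ S) :
    merge S f g i = g ⟨i, h⟩ := by simp [merge, h]

/-- Configurations split into their restrictions to `S` and to its complement. -/
def mergeEquiv (S : Finset ι) :
    (Config (fun i : {i // i ∈ S} => d i)) × (Config (fun i : {i // i ∉ S} => d i)) ≃
      Config d where
  toFun p := merge S p.1 p.2
  invFun x := (fun i => x i, fun i => x i)
  left_inv p := by
    refine Prod.ext ?_ ?_ <;> funext i
    · exact merge_of_mem S _ _ i.2
    · exact merge_of_notMem S _ _ i.2
  right_inv x := merge_restrict S x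

lemma sum_merge (S : Finset ι) (F : Config d → ℂ) :
    ∑ x, F x = ∑ f, ∑ g, F (merge S f g) := by
  rw [← Fintype.sum_prod_type' (f := fun f g => F (merge S f g))]
  exact ((mergeEquiv S).sum_comp F).symm

/-- Pairing a kernel with a marginal, as a sum over global configurations. -/
lemma sum_mul_marginal (S : Finset ι) (ρ : Matrix (Config d) (Config d) ℂ)
    (G : Config (fun i : {i // i ∈ S} => d i) → Config (fun i : {i // i ∈ S} => d i) → ℂ) :
    ∑ f, ∑ g, G f g * marginal S ρ f g =
      ∑ x : Config d, ∑ y : Config d, if ∀ i, i ∉ S → x i = y i then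
        G (fun i => x i) (fun i => y i) * ρ x y else 0 := by
  have hiff : ∀ (f g : Config (fun i : {i // i ∈ S} => d i))
      (h h' : Config (fun i : {i // i ∉ S} => d i)),
      (∀ i, i ∉ S → merge S f h i = merge S g h' i) ↔ h = h' := by
    intro f g h h'
    constructor
    · intro H; funext i
      have := H i i.2
      rwa [merge_of_notMem S _ _ i.2, merge_of_notMem S _ _ i.2] at this
    · rintro rfl i hi
      rw [merge_of_notMem S _ _ hi, merge_of_notMem S _ _ hi]
  have hres : ∀ (f : Config (fun i : {i // i ∈ S} => d i))
      (h : Config (fun i : {i // i ∉ S} => d i)),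
      (fun i : {i // i ∈ S} => merge S f h i) = f := by
    intro f h; funext i; exact merge_of_mem S _ _ i.2
  rw [sum_merge S]
  refine Finset.sum_congr rfl fun f _ => ?_
  simp_rw [sum_merge S, hiff, hres, Finset.sum_ite_eq, Finset.mem_univ, if_true]
  rw [Finset.sum_comm]
  refine Finset.sum_congr rfl fun g _ => ?_
  rw [marginal, Finset.mul_sum]

lemma marginal_eq_sum (S : Finset ι) (ρ : Matrix (Config d) (Config d) ℂ)
    (f g : Config (fun i : {i // i ∈ S} => d i)) :
    marginal S ρ f g = ∑ x : Config d, ∑ y : Config d,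
      if (∀ i : {i // i ∈ S}, x i = f i) ∧ (∀ i : {i // i ∈ S}, y i = g i) ∧
        (∀ i, i ∉ S → x i = y i) then ρ x y else 0 := by
  have h := sum_mul_marginal S ρ (fun f' g' => if f' = f ∧ g' = g then 1 else 0)
  have hl : ∑ f', ∑ g', (if f' = f ∧ g' = g then (1 : ℂ) else 0) * marginal S ρ f' g' =
      marginal S ρ f g := by
    rw [Finset.sum_eq_single f, Finset.sum_eq_single g] <;> simp +contextual
  rw [← hl, h]
  refine Finset.sum_congr rfl fun x _ => Finset.sum_congr rfl fun y _ => ?_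
  rw [ite_mul, one_mul, zero_mul, ← ite_and]
  simp only [funext_iff]
  exact if_congr (by tauto) rfl rfl

lemma marginal_eq_trace {S : Finset ι} (hS : ∀ i, i ∉ S)
    (ρ : Matrix (Config d) (Config d) ℂ) (f g : Config (fun i : {i // i ∈ S} => d i)) :
    marginal S ρ f g = ρ.trace := by
  rw [marginal_eq_sum, Matrix.trace]
  refine Finset.sum_congr rfl fun x _ => ?_
  rw [Finset.sum_eq_single x]
  · rw [if_pos ⟨fun i => (hS i i.2).elim, fun i => (hS i i.2).elim, fun _ _ => rfl⟩]; rfl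
  · intro y _ hy
    exact if_neg fun h => hy (funext fun i => (h.2.2 i (hS i)).symm)
  · simp

lemma marginal_eq_self {S : Finset ι} (hS : ∀ i, i ∈ S)
    (ρ : Matrix (Config d) (Config d) ℂ) (f g : Config (fun i : {i // i ∈ S} => d i)) :
    marginal S ρ f g = ρ (fun i => f ⟨i, hS i⟩) (fun i => g ⟨i, hS i⟩) := by
  rw [marginal_eq_sum, Finset.sum_eq_single (fun i => f ⟨i, hS i⟩),
    Finset.sum_eq_single (fun i => g ⟨i, hS i⟩)]
  · rw [if_pos ⟨fun _ => rfl, fun _ => rfl, fun i hi => (hi (hS i)).elim⟩]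
  · intro y _ hy
    exact if_neg fun h => hy (funext fun i => h.2.1 ⟨i, hS i⟩)
  · simp
  · intro x _ hx
    exact Finset.sum_eq_zero fun y _ =>
      if_neg fun h => hx (funext fun i => h.1 ⟨i, hS i⟩)
  · simp

lemma eq_of_marginal_eq {S : Finset ι} (hS : ∀ i, i ∈ S)
    {ρ σ : Matrix (Config d) (Config d) ℂ} (h : marginal S σ = marginal S ρ) : σ = ρ := by
  ext x y
  have := congrFun (congrFun h (fun i => x i)) (fun i => y i)
  rwa [marginal_eq_self hS, marginal_eq_self hS] at this

lemma trace_marginal (S : Finset ι) (ρ : Matrix (Config d) (Config d) ℂ) :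
    (marginal S ρ).trace = ρ.trace := by
  simp only [Matrix.trace, Matrix.diag]
  rw [sum_merge S]
  rfl

lemma posSemidef_marginal (S : Finset ι) {ρ : Matrix (Config d) (Config d) ℂ}
    (hρ : ρ.PosSemidef) : (marginal S ρ).PosSemidef := by
  have : marginal S ρ = ∑ h : Config (fun i : {i // i ∉ S} => d i),
      ρ.submatrix (fun f => merge S f h) (fun f => merge S f h) := by
    ext f g; simp [marginal, Matrix.sum_apply]
  rw [this]
  exact Matrix.posSemidef_sum _ fun h _ => hρ.submatrix _

lemma isState_marginal (S : Finset ι) {ρ : Matrix (Config d) (Config d) ℂ}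
    (hρ : IsState ρ) : IsState (marginal S ρ) :=
  ⟨posSemidef_marginal S hρ.1, (trace_marginal S ρ).trans hρ.2⟩

lemma mk_mem_of_mem_map_subtype {B : Finset ι} {S : Finset {i // i ∈ B}} {i : ι}
    (h : i ∈ S.map (Function.Embedding.subtype _)) :
    ⟨i, Finset.property_of_mem_map_subtype S h⟩ ∈ S := by
  obtain ⟨j, hj, rfl⟩ := Finset.mem_map.1 h
  exact hj

lemma marginal_marginal (B : Finset ι) (S : Finset {i // i ∈ B})
    (ρ : Matrix (Config d) (Config d) ℂ)
    (f g : Config (fun i : {i : {i // i ∈ B} // i ∈ S} => d i.1)) :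
    marginal S (marginal B ρ) f g =
      marginal (S.map (Function.Embedding.subtype _)) ρ
        (fun i => f ⟨⟨i, Finset.property_of_mem_map_subtype S i.2⟩, mk_mem_of_mem_map_subtype i.2⟩)
        (fun i => g ⟨⟨i, Finset.property_of_mem_map_subtype S i.2⟩, mk_mem_of_mem_map_subtype i.2⟩) := by
  have hmem : ∀ i : {i // i ∈ B}, i.1 ∈ S.map (Function.Embedding.subtype _) ↔ i ∈ S := by
    intro i; simp
  rw [marginal_eq_sum, marginal_eq_sum]
  have := sum_mul_marginal B ρ (fun x y =>
    if (∀ i : {i // i ∈ S}, x i = f i) ∧ (∀ i : {i // i ∈ S}, y i = g i) ∧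
        (∀ i, i ∉ S → x i = y i) then 1 else 0)
  simp only [ite_mul, one_mul, zero_mul] at this
  rw [this]
  refine Finset.sum_congr rfl fun x _ => Finset.sum_congr rfl fun y _ => ?_
  rw [← ite_and]
  refine if_congr ⟨?_, ?_⟩ rfl rfl
  · rintro ⟨h1, h2, h3, h4⟩
    refine ⟨fun i => h2 ⟨⟨i, _⟩, _⟩, fun i => h3 ⟨⟨i, _⟩, _⟩, fun i hi => ?_⟩
    by_cases hB : i ∈ B
    · exact h4 ⟨i, hB⟩ fun hS => hi ((hmem ⟨i, hB⟩).2 hS)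
    · exact h1 i hB
  · rintro ⟨h1, h2, h3⟩
    refine ⟨fun i hi => h3 i fun h => hi (Finset.property_of_mem_map_subtype S h),
      fun i => h1 ⟨i.1.1, (hmem i.1).2 i.2⟩, fun i => h2 ⟨i.1.1, (hmem i.1).2 i.2⟩,
      fun i hi => h3 i fun h => hi ((hmem i).1 h)⟩

end Marginals

section Blocks

variable {d : ι → ℕ} {T : Type*} [Fintype T] [DecidableEq T]

/-- The tensor product of operators on the blocks `B t`. -/
def blockTensor (B : T → Finset ι)
    (σ : ∀ t, Matrix (Config (fun i : {i // i ∈ B t} => d i))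
      (Config (fun i : {i // i ∈ B t} => d i)) ℂ) : Matrix (Config d) (Config d) ℂ :=
  fun f g => ∏ t, σ t (fun i => f i) (fun i => g i)

lemma restrict_bijective {B : T → Finset ι}
    (hdisj : ∀ t t', t ≠ t' → Disjoint (B t) (B t')) (hcover : ∀ i, ∃ t, i ∈ B t) :
    Function.Bijective
      (fun (x : Config d) (t : T) => (fun i => x i : Config (fun i : {i // i ∈ B t} => d i))) := by
  constructor
  · intro x y h
    funext i
    obtain ⟨t, ht⟩ := hcover i
    exact congrFun (congrFun h t) ⟨i, ht⟩
  · intro y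
    choose b hb using hcover
    refine ⟨fun i => y (b i) ⟨i, hb i⟩, ?_⟩
    funext t i
    obtain ⟨i, hi⟩ := i
    obtain rfl : b i = t := by
      by_contra hne
      exact Finset.disjoint_left.1 (hdisj _ _ hne) (hb i) hi
    rfl

lemma sum_prod_blocks {B : T → Finset ι}
    (hdisj : ∀ t t', t ≠ t' → Disjoint (B t) (B t')) (hcover : ∀ i, ∃ t, i ∈ B t)
    (F : ∀ t, Config (fun i : {i // i ∈ B t} => d i) → ℂ) :
    ∑ x : Config d, ∏ t, F t (fun i => x i) = ∏ t, ∑ y, F t y := by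
  rw [Finset.prod_univ_sum, Fintype.piFinset_univ]
  exact (restrict_bijective hdisj hcover).sum_comp (fun y => ∏ t, F t (y t))

lemma trace_blockTensor {B : T → Finset ι}
    (hdisj : ∀ t t', t ≠ t' → Disjoint (B t) (B t')) (hcover : ∀ i, ∃ t, i ∈ B t)
    (σ : ∀ t, Matrix (Config (fun i : {i // i ∈ B t} => d i))
      (Config (fun i : {i // i ∈ B t} => d i)) ℂ) :
    (blockTensor B σ).trace = ∏ t, (σ t).trace :=
  sum_prod_blocks hdisj hcover fun t y => σ t y y

/-- Marginals of a tensor product are tensor products of marginals. -/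
lemma marginal_blockTensor {B : T → Finset ι}
    (hdisj : ∀ t t', t ≠ t' → Disjoint (B t) (B t')) (hcover : ∀ i, ∃ t, i ∈ B t)
    (σ : ∀ t, Matrix (Config (fun i : {i // i ∈ B t} => d i))
      (Config (fun i : {i // i ∈ B t} => d i)) ℂ) (S : Finset ι)
    (f g : Config (fun i : {i // i ∈ S} => d i)) :
    marginal S (blockTensor B σ) f g =
      ∏ t, marginal (S.subtype (· ∈ B t)) (σ t)
        (fun i => f ⟨i.1.1, Finset.mem_subtype.1 i.2⟩)
        (fun i => g ⟨i.1.1, Finset.mem_subtype.1 i.2⟩) := by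
  simp_rw [marginal_eq_sum]
  rw [← sum_prod_blocks hdisj hcover]
  refine Finset.sum_congr rfl fun x _ => ?_
  rw [← sum_prod_blocks hdisj hcover]
  refine Finset.sum_congr rfl fun y _ => ?_
  split_ifs with h
  · obtain ⟨h1, h2, h3⟩ := h
    refine Finset.prod_congr rfl fun t _ => (if_pos ?_).symm
    exact ⟨fun i => h1 ⟨i.1.1, Finset.mem_subtype.1 i.2⟩,
      fun i => h2 ⟨i.1.1, Finset.mem_subtype.1 i.2⟩,
      fun i hi => h3 i fun h => hi (Finset.mem_subtype.2 h)⟩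
  · by_contra hne
    have h' := fun t => (ite_ne_right_iff.1
      (Finset.prod_ne_zero_iff.1 (Ne.symm hne) t (Finset.mem_univ t))).1
    refine h ⟨fun i => ?_, fun i => ?_, fun i hi => ?_⟩ <;> obtain ⟨t, ht⟩ := hcover i
    · exact (h' t).1 ⟨⟨i, ht⟩, Finset.mem_subtype.2 i.2⟩
    · exact (h' t).2.1 ⟨⟨i, ht⟩, Finset.mem_subtype.2 i.2⟩
    · exact (h' t).2.2 ⟨i, ht⟩ fun h => hi (Finset.mem_subtype.1 h)

lemma marginal_blockTensor_block {B : T → Finset ι}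
    (hdisj : ∀ t t', t ≠ t' → Disjoint (B t) (B t')) (hcover : ∀ i, ∃ t, i ∈ B t)
    (σ : ∀ t, Matrix (Config (fun i : {i // i ∈ B t} => d i))
      (Config (fun i : {i // i ∈ B t} => d i)) ℂ) (hσ : ∀ t, (σ t).trace = 1) (t : T) :
    marginal (B t) (blockTensor B σ) = σ t := by
  ext f g
  rw [marginal_blockTensor hdisj hcover, Finset.prod_eq_single t]
  · exact marginal_eq_self (fun i => Finset.mem_subtype.2 i.2) _ _ _
  · intro t' _ hne
    rw [marginal_eq_trace _ (σ t'), hσ]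
    intro i hi
    exact Finset.disjoint_left.1 (hdisj _ _ hne) i.2 (Finset.mem_subtype.1 hi)
  · simp

end Blocks

section Producibility

variable {d : ι → ℕ}

lemma producible_of_sum {k : ℕ} {J : Type*} [Fintype J] (w : J → ℝ) (v : J → Config d → ℂ)
    (hw : ∀ j, 0 ≤ w j) (hv : ∀ j, PureProd k (v j)) :
    Producible k (∑ j, (w j : ℂ) • Matrix.vecMulVec (v j) (star (v j))) :=
  ⟨Fintype.card J, fun j => w ((Fintype.equivFin J).symm j),
    fun j => v ((Fintype.equivFin J).symm j), fun _ => hw _, fun _ => hv _,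
    ((Fintype.equivFin J).symm.sum_comp
      fun j => (w j : ℂ) • Matrix.vecMulVec (v j) (star (v j))).symm⟩

lemma producible_sum {k : ℕ} {J : Type*} [Fintype J] (w : J → ℝ)
    (σ : J → Matrix (Config d) (Config d) ℂ) (hw : ∀ j, 0 ≤ w j)
    (hσ : ∀ j, Producible k (σ j)) : Producible k (∑ j, (w j : ℂ) • σ j) := by
  choose n c v hc hv h using hσ
  convert producible_of_sum (J := Σ j, Fin (n j)) (fun p => w p.1 * c p.1 p.2)
    (fun p => v p.1 p.2) (fun p => mul_nonneg (hw _) (hc _ _)) (fun p => hv _ _) using 1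
  rw [Fintype.sum_sigma]
  refine Finset.sum_congr rfl fun j _ => ?_
  conv_lhs => rw [h j]
  simp only [Finset.smul_sum, smul_smul, Complex.ofReal_mul]

lemma posSemidef_of_producible {k : ℕ} {σ : Matrix (Config d) (Config d) ℂ}
    (h : Producible k σ) : σ.PosSemidef := by
  obtain ⟨n, w, v, hw, -, rfl⟩ := h
  exact Matrix.posSemidef_sum _ fun j _ =>
    (Matrix.posSemidef_vecMulVec_self_star (v j)).smul (by exact_mod_cast hw j)

lemma exists_eq_sum_vecMulVec {n : Type*} [Fintype n] [DecidableEq n] {A : Matrix n n ℂ}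
    (hA : A.PosSemidef) :
    ∃ v : n → n → ℂ, A = ∑ j, Matrix.vecMulVec (v j) (star (v j)) := by
  obtain ⟨C, rfl⟩ : ∃ C : Matrix n n ℂ, A = Cᴴ * C := by
    open scoped MatrixOrder in
    exact CStarAlgebra.nonneg_iff_eq_star_mul_self.1 hA.nonneg
  refine ⟨fun j => star (C j), ?_⟩
  ext a b
  simp [Matrix.mul_apply, Matrix.sum_apply, Matrix.vecMulVec_apply]

lemma pureProd_of_dependsOn [∀ i, NeZero (d i)] {k : ℕ} {T : Type*} [Fintype T] [DecidableEq T]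
    (P : ι → T) (hP : ∀ t, (Finset.univ.filter (fun i => P i = t)).card ≤ k)
    (u : T → Config d → ℂ) (hu : ∀ t, DependsOn (u t) {i | P i = t}) :
    PureProd k (fun f => ∏ t, u t f) := by
  let e := Fintype.equivFin T
  refine ⟨Fintype.card T, fun i => e (P i), fun t => ?_,
    fun t x => u (e.symm t) (fun i => if h : e (P i) = t then x ⟨i, h⟩ else 0), ?_⟩
  · simpa [← Equiv.eq_symm_apply] using hP (e.symm t)
  · funext f
    rw [ProdOver, ← e.symm.prod_comp]
    refine Finset.prod_congr rfl fun t _ => hu _ fun i hi => ?_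
    have : e (P i) = t := by rw [show P i = e.symm t from hi]; simp
    simp [this]

lemma pureProd_of_card_le [∀ i, NeZero (d i)] {k : ℕ} (h : Fintype.card ι ≤ k)
    (v : Config d → ℂ) : PureProd k v := by
  simpa using pureProd_of_dependsOn (T := Unit) (fun _ => ()) (by simpa using h)
    (fun _ => v) (fun _ x y hxy => congrArg v (funext fun i => hxy i rfl))

lemma producible_of_card_le [∀ i, NeZero (d i)] {k : ℕ} (h : Fintype.card ι ≤ k)
    {σ : Matrix (Config d) (Config d) ℂ} (hσ : σ.PosSemidef) : Producible k σ := by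
  obtain ⟨v, rfl⟩ := exists_eq_sum_vecMulVec hσ
  simpa using producible_of_sum (fun _ => 1) v (by simp) (fun j => pureProd_of_card_le h (v j))

lemma producible_prodAcross [∀ i, NeZero (d i)] {k : ℕ} {S : Finset ι}
    (hS : S.card ≤ k) (hS' : Sᶜ.card ≤ k)
    {A : Matrix (Config (fun i : {i // i ∈ S} => d i))
      (Config (fun i : {i // i ∈ S} => d i)) ℂ}
    {C : Matrix (Config (fun i : {i // i ∉ S} => d i))
      (Config (fun i : {i // i ∉ S} => d i)) ℂ}
    (hA : A.PosSemidef) (hC : C.PosSemidef) : Producible k (prodAcross S A C) := by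
  obtain ⟨a, rfl⟩ := exists_eq_sum_vecMulVec hA
  obtain ⟨c, rfl⟩ := exists_eq_sum_vecMulVec hC
  convert producible_of_sum (k := k) (fun _ => 1)
    (fun (p : Config (fun i : {i // i ∈ S} => d i) × Config (fun i : {i // i ∉ S} => d i))
      (f : Config d) => ∏ t : Bool, bif t then a p.1 (fun i => f i) else c p.2 (fun i => f i))
    (by simp) ?_ using 1
  · ext f g
    simp only [prodAcross, Matrix.sum_apply, Matrix.vecMulVec_apply, Fintype.sum_prod_type,
      Finset.sum_mul_sum]
    refine Finset.sum_congr rfl fun i _ => Finset.sum_congr rfl fun j _ => ?_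
    simp [Matrix.vecMulVec_apply]
    ring
  · intro p
    refine pureProd_of_dependsOn (fun i => decide (i ∈ S)) ?_ _ ?_
    · rintro (_ | _)
      · refine le_of_eq_of_le (congrArg _ ?_) hS'
        ext i; simp
      · refine le_of_eq_of_le (congrArg _ ?_) hS
        ext i; simp
    · rintro (_ | _) x y hxy
      · exact congrArg (c p.2) (funext fun i => hxy i (by simp))
      · exact congrArg (a p.1) (funext fun i => hxy i (by simp))

lemma producible_of_bisep [∀ i, NeZero (d i)] {σ : Matrix (Config d) (Config d) ℂ}
    (h : Bisep σ) : Producible (Fintype.card ι - 1) σ := by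
  obtain ⟨n, w, S, τ, hw, hS, hτ, rfl⟩ := h
  refine producible_sum w τ hw fun j => ?_
  obtain ⟨n', w', A, C, hw', hAC, h⟩ := hτ j
  rw [h]
  refine producible_sum w' _ hw' fun j' => producible_prodAcross ?_ ?_ (hAC j').1 (hAC j').2
  · have := (Finset.card_lt_iff_ne_univ (S j)).2 (hS j).2
    omega
  · have := (Finset.card_lt_iff_ne_univ (S j)ᶜ).2 (by simpa using (hS j).1)
    omega

/-- Tensor products of block vectors that are `k`-producible are `k`-producible. -/
lemma pureProd_block_prod [∀ i, NeZero (d i)] {k : ℕ} {T : Type*} [Fintype T] [DecidableEq T]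
    {B : T → Finset ι} (hcover : ∀ i, ∃ t, i ∈ B t)
    (hdisj : ∀ t t', t ≠ t' → Disjoint (B t) (B t'))
    (v : ∀ t, Config (fun i : {i // i ∈ B t} => d i) → ℂ) (hv : ∀ t, PureProd k (v t)) :
    PureProd k (fun f : Config d => ∏ t, v t (fun i => f i)) := by
  choose s P hP u hu using hv
  choose b hb using hcover
  have hb_eq : ∀ {i t}, i ∈ B t → b i = t := fun {i t} hi => by
    by_contra hne
    exact Finset.disjoint_left.1 (hdisj _ _ hne) (hb i) hi
  convert pureProd_of_dependsOn (k := k) (T := Σ t, Fin (s t))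
    (fun i => ⟨b i, P (b i) ⟨i, hb i⟩⟩) ?_
    (fun p f => u p.1 p.2 (fun i => f i.1)) ?_ using 1
  · funext f
    rw [Fintype.prod_sigma]
    refine Finset.prod_congr rfl fun t _ => ?_
    rw [hu t]; rfl
  · rintro ⟨t, r⟩
    refine le_trans ?_ (hP t r)
    rw [← Finset.card_map (Function.Embedding.subtype _)]
    refine Finset.card_le_card fun i hi => ?_
    have h := (Finset.mem_filter.1 hi).2
    cases h
    simp [hb i]
  · rintro ⟨t, r⟩ x y hxy
    refine congrArg (u t r) (funext fun ⟨⟨i, hi⟩, hr⟩ => hxy i ?_)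
    obtain rfl := hb_eq hi
    exact congrArg (Sigma.mk (b i)) hr

lemma producible_blockTensor [∀ i, NeZero (d i)] {k : ℕ} {T : Type*} [Fintype T]
    [DecidableEq T] {B : T → Finset ι} (hcover : ∀ i, ∃ t, i ∈ B t)
    (hdisj : ∀ t t', t ≠ t' → Disjoint (B t) (B t'))
    (σ : ∀ t, Matrix (Config (fun i : {i // i ∈ B t} => d i))
      (Config (fun i : {i // i ∈ B t} => d i)) ℂ) (hσ : ∀ t, Producible k (σ t)) :
    Producible k (blockTensor B σ) := by
  choose n w v hw hv h using hσ
  convert producible_of_sum (k := k) (J := ∀ t, Fin (n t)) (fun c => ∏ t, w t (c t))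
    (fun c (f : Config d) => ∏ t, v t (c t) (fun i => f i))
    (fun c => Finset.prod_nonneg fun t _ => hw t _)
    (fun c => pureProd_block_prod hcover hdisj _ fun t => hv t _) using 1
  ext f g
  simp only [blockTensor]
  conv_lhs => enter [2, t]; rw [h t]
  simp only [Matrix.sum_apply]
  rw [Finset.prod_univ_sum, Fintype.piFinset_univ]
  refine Finset.sum_congr rfl fun c _ => ?_
  simp [Matrix.vecMulVec_apply, Finset.prod_mul_distrib]

/-- A tensor product of producible states on the blocks is a state. -/
lemma isState_blockTensor [∀ i, NeZero (d i)] {k : ℕ} {T : Type*} [Fintype T]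
    [DecidableEq T] {B : T → Finset ι} (hcover : ∀ i, ∃ t, i ∈ B t)
    (hdisj : ∀ t t', t ≠ t' → Disjoint (B t) (B t'))
    (σ : ∀ t, Matrix (Config (fun i : {i // i ∈ B t} => d i))
      (Config (fun i : {i // i ∈ B t} => d i)) ℂ) (hσ : ∀ t, Producible k (σ t))
    (htr : ∀ t, (σ t).trace = 1) : IsState (blockTensor B σ) :=
  ⟨posSemidef_of_producible (producible_blockTensor hcover hdisj σ hσ), by
    simp [trace_blockTensor hdisj hcover, htr]⟩

lemma bisep_of_sum {J : Type*} [Fintype J] (w : J → ℝ) (S : J → Finset ι)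
    (σ : J → Matrix (Config d) (Config d) ℂ) (hw : ∀ j, 0 ≤ w j)
    (hS : ∀ j, S j ≠ ∅ ∧ S j ≠ Finset.univ) (hσ : ∀ j, SepAcross (S j) (σ j)) :
    Bisep (∑ j, (w j : ℂ) • σ j) :=
  ⟨Fintype.card J, fun j => w ((Fintype.equivFin J).symm j),
    fun j => S ((Fintype.equivFin J).symm j),
    fun j => σ ((Fintype.equivFin J).symm j), fun _ => hw _, fun _ => hS _, fun _ => hσ _,
    ((Fintype.equivFin J).symm.sum_comp fun j => (w j : ℂ) • σ j).symm⟩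

lemma sepAcross_vecMulVec [∀ i, NeZero (d i)] (S : Finset ι) (a c : Config d → ℂ)
    (ha : DependsOn a {i | i ∈ S}) (hc : DependsOn c {i | i ∉ S}) :
    SepAcross S (Matrix.vecMulVec (a * c) (star (a * c))) := by
  let a' : Config (fun i : {i // i ∈ S} => d i) → ℂ := fun x => a (merge S x 0)
  let c' : Config (fun i : {i // i ∉ S} => d i) → ℂ := fun x => c (merge S 0 x)
  have ha' : ∀ f : Config d, a f = a' (fun i => f i) := fun f =>
    ha fun i hi => (merge_of_mem S (fun i => f i) 0 hi).symm
  have hc' : ∀ f : Config d, c f = c' (fun i => f i) := fun f =>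
    hc fun i hi => (merge_of_notMem S 0 (fun i => f i) hi).symm
  refine ⟨1, fun _ => 1, fun _ => Matrix.vecMulVec a' (star a'),
    fun _ => Matrix.vecMulVec c' (star c'), by simp, fun _ =>
    ⟨Matrix.posSemidef_vecMulVec_self_star _, Matrix.posSemidef_vecMulVec_self_star _⟩, ?_⟩
  ext f g
  simp [Matrix.vecMulVec_apply, prodAcross, ha', hc']
  ring

/-- On a block with more than `k` parties, every `k`-producible operator has a biseparable
marginal. -/
lemma bisep_marginal [∀ i, NeZero (d i)] {k : ℕ} {B : Finset ι} (hB : k < B.card)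
    {σ : Matrix (Config d) (Config d) ℂ} (hσ : Producible k σ) : Bisep (marginal B σ) := by
  obtain ⟨n, w, v, hw, hv, rfl⟩ := hσ
  choose s P hP u hu using hv
  obtain ⟨i₀, hi₀⟩ : B.Nonempty := Finset.card_pos.1 (by omega)
  let S : Fin n → Finset {i // i ∈ B} := fun j =>
    Finset.univ.filter (fun i => P j i = P j i₀)
  let τ : (Fin n × Config (fun i : {i // i ∉ B} => d i)) →
      Config (fun i : {i // i ∈ B} => d i) → ℂ := fun p x => v p.1 (merge B x p.2)
  convert bisep_of_sum (J := Fin n × Config (fun i : {i // i ∉ B} => d i))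
    (fun p => w p.1) (fun p => S p.1) (fun p => Matrix.vecMulVec (τ p) (star (τ p)))
    (fun p => hw _) ?_ ?_ using 1
  · ext x y
    simp only [marginal, Matrix.sum_apply, Fintype.sum_prod_type, Matrix.smul_apply,
      Matrix.vecMulVec_apply]
    rw [Finset.sum_comm]
    rfl
  · rintro ⟨j, h⟩
    refine ⟨Finset.nonempty_iff_ne_empty.1 ⟨⟨i₀, hi₀⟩, by simp [S]⟩, fun huniv => ?_⟩
    refine absurd (hP j (P j i₀)) (not_le.2 (hB.trans_le (Finset.card_le_card fun i hi => ?_)))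
    have : (⟨i, hi⟩ : {i // i ∈ B}) ∈ S j := huniv ▸ Finset.mem_univ _
    simpa [S] using this
  · rintro ⟨j, h⟩
    have hτ : τ (j, h) =
        (fun x => u j (P j i₀) (fun i => merge B x h i)) *
        (fun x => ∏ t ∈ Finset.univ.erase (P j i₀), u j t (fun i => merge B x h i)) := by
      funext x
      simp only [τ, hu j, ProdOver, Pi.mul_apply]
      exact (Finset.mul_prod_erase _ _ (Finset.mem_univ _)).symm
    have hmerge : ∀ (x y : Config (fun i : {i // i ∈ B} => d i)) (i : ι),
        (∀ hi : i ∈ B, x ⟨i, hi⟩ = y ⟨i, hi⟩) → merge B x h i = merge B y h i := by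
      intro x y i hxy
      unfold merge
      split_ifs with hi
      · exact hxy hi
      · rfl
    simp only [hτ]
    refine sepAcross_vecMulVec _ _ _ (fun x y hxy => ?_) (fun x y hxy => ?_)
    · refine congrArg _ (funext fun i => hmerge x y i fun hi => hxy _ ?_)
      simpa [S] using i.2
    · refine Finset.prod_congr rfl fun t ht => ?_
      refine congrArg _ (funext fun i => hmerge x y i fun hi => hxy _ ?_)
      simpa [S, i.2] using Finset.ne_of_mem_erase ht

end Producibility

section DetectionLength

variable {d : ι → ℕ}

/-- GME detection on a block with at least `k` parties gives `k`-depth detection. -/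
lemma detectsDep_of_detectsGME [∀ i, NeZero (d i)] {k : ℕ} (hk : 0 < k) {B : Finset ι}
    (hB : k ≤ B.card) {ρ : Matrix (Config d) (Config d) ℂ} {𝒮 : Finset (Finset {i // i ∈ B})}
    (h : DetectsGME 𝒮 (marginal B ρ)) :
    DetectsDep k (𝒮.image (Finset.map (Function.Embedding.subtype _))) ρ := by
  intro σ hσ hcomp hprod
  refine h (marginal B σ) (isState_marginal B hσ) (fun S hS => ?_)
    (bisep_marginal (by omega) hprod)
  ext f g
  rw [marginal_marginal, marginal_marginal, hcomp _ (Finset.mem_image_of_mem _ hS)]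

lemma lDep_le_lGME [∀ i, NeZero (d i)] {k : ℕ} (hk : 0 < k) {B : Finset ι}
    (hB : k ≤ B.card) (ρ : Matrix (Config d) (Config d) ℂ) :
    lDep k ρ ≤ lGME (marginal B ρ) := by
  refine le_sInf ?_
  rintro _ ⟨𝒮, h𝒮, rfl⟩
  refine sInf_le ⟨_, detectsDep_of_detectsGME hk hB h𝒮, ?_⟩
  rw [Finset.sup_image]
  congr 2
  funext S
  simp

lemma lGME_le_of_detectsGME {𝒮 : Finset (Finset ι)} {ρ : Matrix (Config d) (Config d) ℂ}
    (h : DetectsGME 𝒮 ρ) : lGME ρ ≤ ((𝒮.sup Finset.card : ℕ) : ℕ∞) :=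
  sInf_le ⟨𝒮, h, rfl⟩

lemma lGME_le_card {ρ : Matrix (Config d) (Config d) ℂ} (h : ¬ Bisep ρ) :
    lGME ρ ≤ Fintype.card ι := by
  refine sInf_le ⟨{Finset.univ}, fun σ _ hcomp => ?_, by simp⟩
  rwa [eq_of_marginal_eq Finset.mem_univ (hcomp _ (Finset.mem_singleton_self _))]

/-- A family detecting the depth of a tensor product detects, after restriction, the genuine
entanglement of one of its blocks with exactly `k` parties. -/
lemma exists_detectsGME_of_detectsDep [∀ i, NeZero (d i)] {k : ℕ} {T : Type*} [Fintype T]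
    [DecidableEq T] {B : T → Finset ι}
    (hdisj : ∀ t t', t ≠ t' → Disjoint (B t) (B t')) (hcover : ∀ i, ∃ t, i ∈ B t)
    (hsize : ∀ t, (B t).card ≤ k)
    {φ : ∀ t, Matrix (Config (fun i : {i // i ∈ B t} => d i))
      (Config (fun i : {i // i ∈ B t} => d i)) ℂ} (hφ : ∀ t, IsState (φ t))
    {𝒮 : Finset (Finset ι)} (h : DetectsDep k 𝒮 (blockTensor B φ)) :
    ∃ t, (B t).card = k ∧ DetectsGME (𝒮.image (Finset.subtype (· ∈ B t))) (φ t) := by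
  by_contra hcon
  have hex : ∀ t, ∃ σ, IsState σ ∧
      Compatible (𝒮.image (Finset.subtype (· ∈ B t))) (φ t) σ ∧ Producible (k - 1) σ := by
    intro t
    by_cases ht : (B t).card = k
    · by_contra hno
      refine hcon ⟨t, ht, fun σ hσ hcomp hbi => hno ⟨σ, hσ, hcomp, ?_⟩⟩
      simpa [ht] using producible_of_bisep hbi
    · refine ⟨φ t, hφ t, fun _ _ => rfl, producible_of_card_le ?_ (hφ t).1⟩
      have := hsize t
      rw [Fintype.card_coe]
      omega
  choose σ hσ hcomp hprod using hex
  refine h (blockTensor B σ) (isState_blockTensor hcover hdisj σ hprod fun t => (hσ t).2)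
    (fun S hS => ?_) (producible_blockTensor hcover hdisj σ hprod)
  ext f g
  rw [marginal_blockTensor hdisj hcover, marginal_blockTensor hdisj hcover]
  exact Finset.prod_congr rfl fun t _ => by rw [hcomp t _ (Finset.mem_image_of_mem _ hS)]

lemma not_bisep_of_detectsGME {𝒮 : Finset (Finset ι)} {ρ : Matrix (Config d) (Config d) ℂ}
    (hρ : IsState ρ) (h : DetectsGME 𝒮 ρ) : ¬ Bisep ρ :=
  h ρ hρ fun _ _ => rfl

lemma sup_card_image_subtype_le (𝒮 : Finset (Finset ι)) (B : Finset ι) :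
    (𝒮.image (Finset.subtype (· ∈ B))).sup Finset.card ≤ 𝒮.sup Finset.card := by
  rw [Finset.sup_image]
  refine Finset.sup_mono_fun fun S _ => ?_
  rw [Function.comp_apply, Finset.card_subtype]
  exact Finset.card_filter_le _ _

/-- One-body marginals never detect entanglement depth `k ≥ 2`. -/
lemma two_le_lDep [∀ i, NeZero (d i)] {k : ℕ} (hk : 2 ≤ k)
    {ρ : Matrix (Config d) (Config d) ℂ} (hρ : IsState ρ) : 2 ≤ lDep k ρ := by
  refine le_sInf ?_
  rintro _ ⟨𝒮, h𝒮, rfl⟩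
  by_contra hlt
  have hcard : ∀ S ∈ 𝒮, S.card ≤ 1 := by
    intro S hS
    have h1 : S.card ≤ 𝒮.sup Finset.card := Finset.le_sup (f := Finset.card) hS
    have h2 : 𝒮.sup Finset.card < 2 := by exact_mod_cast not_le.1 hlt
    omega
  have hcover : ∀ i : ι, ∃ t : ι, i ∈ ({t} : Finset ι) := fun i => ⟨i, by simp⟩
  have hdisj : ∀ t t' : ι, t ≠ t' → Disjoint ({t} : Finset ι) {t'} := by simp
  have hprod : ∀ i, Producible (k - 1) (marginal {i} ρ) := fun i =>
    producible_of_card_le (by rw [Fintype.card_coe, Finset.card_singleton]; omega)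
      (posSemidef_marginal {i} hρ.1)
  have htr : ∀ i, (marginal {i} ρ).trace = 1 := fun i => (isState_marginal {i} hρ).2
  have hst := isState_blockTensor hcover hdisj _ hprod htr
  refine h𝒮 _ hst (fun S hS => ?_) (producible_blockTensor hcover hdisj _ hprod)
  rcases Nat.le_one_iff_eq_zero_or_eq_one.1 (hcard S hS) with h | h
  · obtain rfl := Finset.card_eq_zero.1 h
    ext f g
    rw [marginal_eq_trace (by simp), marginal_eq_trace (by simp), hst.2, hρ.2]
  · obtain ⟨i, rfl⟩ := Finset.card_eq_one.1 h
    exact marginal_blockTensor_block hdisj hcover _ htr i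

end DetectionLength

/-- for a `k`-producible pure product state `|Ψ⟩ = |φ₁⟩ ⊗ ⋯ ⊗ |φ_m⟩` of
entanglement depth exactly `k`, with `D` the set of blocks on exactly `k` parties whose
state is genuinely entangled, `l_dep^k(|Ψ⟩) = min_{φ_i ∈ D} l_GME(|φ_i⟩)`, and in
particular `2 ≤ l_dep^k(|Ψ⟩) ≤ k`. -/
theorem depth_detection_length
    {ι : Type*} [Fintype ι] [DecidableEq ι] {d : ι → ℕ} [∀ i, NeZero (d i)]
    (k : ℕ) (hk : 2 ≤ k) (m : ℕ) (hm : 0 < m) (B : Fin m → Finset ι)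
    (hdisj : ∀ t t' : Fin m, t ≠ t' → Disjoint (B t) (B t'))
    (hcover : ∀ i : ι, ∃ t : Fin m, i ∈ B t)
    (hne : ∀ t : Fin m, B t ≠ ∅)
    (hsize : ∀ t : Fin m, (B t).card ≤ k)
    (φ : ∀ t : Fin m, Config (fun i : {i // i ∈ B t} => d i) → ℂ)
    (hφ : ∀ t : Fin m, IsState (Matrix.vecMulVec (φ t) (star (φ t))))
    (Ψ : Config d → ℂ) (hΨ : Ψ = fun f => ∏ t, φ t (fun i => f i))
    (ρ : Matrix (Config d) (Config d) ℂ)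
    (hρ : ρ = Matrix.vecMulVec Ψ (star Ψ))
    (hdepth : ¬ Producible (k - 1) ρ) :
    lDep k ρ = sInf {l : ℕ∞ | ∃ t : Fin m, (B t).card = k ∧
      ¬ Bisep (Matrix.vecMulVec (φ t) (star (φ t))) ∧
      l = lGME (Matrix.vecMulVec (φ t) (star (φ t)))} ∧
    2 ≤ lDep k ρ ∧ lDep k ρ ≤ (k : ℕ∞) := by
  have hρt : ρ = blockTensor B (fun t => Matrix.vecMulVec (φ t) (star (φ t))) := by
    subst hρ hΨ
    ext f g
    simp [blockTensor, Matrix.vecMulVec_apply, Finset.prod_mul_distrib]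
  have htr : ρ.trace = 1 := by
    rw [hρt, trace_blockTensor hdisj hcover]
    exact Finset.prod_eq_one fun t _ => (hφ t).2
  have hρs : IsState ρ := ⟨hρ ▸ Matrix.posSemidef_vecMulVec_self_star Ψ, htr⟩
  have hmarg : ∀ t, marginal (B t) ρ = Matrix.vecMulVec (φ t) (star (φ t)) := fun t => by
    rw [hρt]
    exact marginal_blockTensor_block hdisj hcover _ (fun t => (hφ t).2) t
  have hupper : ∀ t, (B t).card = k →
      lDep k ρ ≤ lGME (Matrix.vecMulVec (φ t) (star (φ t))) := fun t ht =>
    hmarg t ▸ lDep_le_lGME (by omega) ht.ge ρ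
  have hlower : ∀ 𝒮, DetectsDep k 𝒮 ρ → ∃ t, (B t).card = k ∧
      ¬ Bisep (Matrix.vecMulVec (φ t) (star (φ t))) ∧
      lGME (Matrix.vecMulVec (φ t) (star (φ t))) ≤ ((𝒮.sup Finset.card : ℕ) : ℕ∞) := by
    intro 𝒮 h𝒮
    obtain ⟨t, ht, hdet⟩ := exists_detectsGME_of_detectsDep hdisj hcover hsize hφ (hρt ▸ h𝒮)
    refine ⟨t, ht, not_bisep_of_detectsGME (hφ t) hdet, (lGME_le_of_detectsGME hdet).trans ?_⟩
    exact_mod_cast sup_card_image_subtype_le 𝒮 (B t)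
  refine ⟨le_antisymm (le_sInf ?_) (le_sInf ?_), two_le_lDep hk hρs, ?_⟩
  · rintro _ ⟨t, ht, -, rfl⟩
    exact hupper t ht
  · rintro _ ⟨𝒮, h𝒮, rfl⟩
    obtain ⟨t, ht, hbi, hle⟩ := hlower 𝒮 h𝒮
    refine le_trans (sInf_le ?_) hle
    exact ⟨t, ht, hbi, rfl⟩
  · obtain ⟨t, ht, hbi, -⟩ := hlower {Finset.univ} fun σ _ hcomp => by
      rwa [eq_of_marginal_eq Finset.mem_univ (hcomp _ (Finset.mem_singleton_self _))]
    refine (hupper t ht).trans ((lGME_le_card hbi).trans_eq ?_)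
    rw [Fintype.card_coe, ht]

end QDL

end
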